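/- arXiv:2403.17410 — 5 statements merged into one kernel-verified Lean document; each statement's English description precedes it below -/
import Mathlib

section
/- Let V be a countable type with decidable equality. Then every set function f : Finset V → ℝ is sum-decomposable via ℝ: there exist functions φ : V → ℝ and ρ : ℝ → ℝ such that f(S) = ρ(∑_{s ∈ S} φ(s)) for every finite subset S ⊆ V. -/
/-- Every set function on finite subsets of a countable ground type is
sum-decomposable via ℝ: `f(S) = ρ(∑_{s ∈ S} φ(s))`. -/
theorem setFunction_sum_decomposable {V : Type*} [Countable V] [DecidableEq V]
    (f : Finset V → ℝ) :
    ∃ (φ : V → ℝ) (ρ : ℝ → ℝ), ∀ S : Finset V, f S = ρ (∑ s ∈ S, φ s) := by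
  obtain ⟨e, he⟩ := exists_injective_nat V
  have hinj : Function.Injective (fun S : Finset V => ∑ s ∈ S, (2 : ℝ) ^ e s) := by
    intro S T h
    have h' : ∑ s ∈ S, 2 ^ e s = ∑ s ∈ T, 2 ^ e s := by
      have h2 : ∑ s ∈ S, (2 : ℝ) ^ e s = ∑ s ∈ T, (2 : ℝ) ^ e s := h
      exact_mod_cast h2
    apply Finset.map_injective ⟨e, he⟩
    apply Finset.geomSum_injective (n := 2) le_rfl
    simpa using h'
  refine ⟨fun v => (2 : ℝ) ^ e v,
    Function.extend (fun S : Finset V => ∑ s ∈ S, (2 : ℝ) ^ e s) f 0, fun S => ?_⟩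
  exact (hinj.extend_apply f 0 S).symm
end

section
/- Let M ∈ ℕ with M ≥ 1 and let f : [0,1]^M → ℝ be continuous and permutation invariant. Then f is continuously sum-decomposable via ℝ^{M+1}: there exist a continuous function φ : [0,1] → ℝ^{M+1} and a continuous function ρ : ℝ^{M+1} → ℝ such that f(x₁, …, x_M) = ρ(∑_{i=1}^{M} φ(x_i)) for all (x₁, …, x_M) ∈ [0,1]^M. -/
lemma esymm_eq_of_psum_eq (M : ℕ) (x y : Fin M → ℝ)
    (h : ∀ k ≤ M, ∑ i, x i ^ k = ∑ i, y i ^ k) (k : ℕ) (hk : k ≤ M) :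
    (Finset.univ.val.map x).esymm k = (Finset.univ.val.map y).esymm k := by
  induction k using Nat.strong_induction_on with
  | _ k ih =>
    rcases Nat.eq_zero_or_pos k with rfl | hpos
    · simp [Multiset.esymm]
    have key : ∀ z : Fin M → ℝ, (k : ℝ) * (Finset.univ.val.map z).esymm k = (-1) ^ (k + 1) *
        ∑ a ∈ Finset.HasAntidiagonal.antidiagonal k with a.1 < k,
          (-1) ^ a.1 * (Finset.univ.val.map z).esymm a.1 * ∑ i, z i ^ a.2 := by
      intro z
      have := congrArg (MvPolynomial.aeval z) (MvPolynomial.mul_esymm_eq_sum (Fin M) ℝ k)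
      simpa only [MvPolynomial.psum, MvPolynomial.aeval_esymm_eq_multiset_esymm, map_mul, map_sum, map_pow, map_neg, map_one, map_natCast, MvPolynomial.aeval_X] using this
    have hk0 : (k : ℝ) ≠ 0 := by positivity
    apply mul_left_cancel₀ hk0
    rw [key x, key y]
    congr 1
    apply Finset.sum_congr rfl
    intro a ha
    simp only [Finset.mem_filter, Finset.HasAntidiagonal.mem_antidiagonal] at ha
    rw [ih a.1 ha.2 (by omega), h a.2 (by omega)]

lemma map_eq_of_psum_eq (M : ℕ) (x y : Fin M → ℝ)
    (h : ∀ k ≤ M, ∑ i, x i ^ k = ∑ i, y i ^ k) :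
    Finset.univ.val.map x = Finset.univ.val.map y := by
  have h2 : ((Finset.univ.val.map x).map fun t => Polynomial.X - Polynomial.C t).prod =
      ((Finset.univ.val.map y).map fun t => Polynomial.X - Polynomial.C t).prod := by
    rw [Multiset.prod_X_sub_X_eq_sum_esymm, Multiset.prod_X_sub_X_eq_sum_esymm]
    have hc : ∀ z : Fin M → ℝ, Multiset.card (Finset.univ.val.map z) = M := by simp
    rw [hc, hc]
    apply Finset.sum_congr rfl
    intro j hj
    rw [esymm_eq_of_psum_eq M x y h j (by simpa [Nat.lt_succ_iff] using hj)]
  have := congrArg Polynomial.roots h2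
  rwa [Polynomial.roots_multiset_prod_X_sub_C, Polynomial.roots_multiset_prod_X_sub_C] at this

lemma exists_perm_of_psum_eq (M : ℕ) (x y : Fin M → ℝ)
    (h : ∀ k ≤ M, ∑ i, x i ^ k = ∑ i, y i ^ k) :
    ∃ π : Equiv.Perm (Fin M), x ∘ π = y := by
  have hm := map_eq_of_psum_eq M x y h
  have hof : ∀ z : Fin M → ℝ, ((List.ofFn (z ∘ Tuple.sort z) : List ℝ) : Multiset ℝ) =
      Finset.univ.val.map z := by
    intro z
    rw [Multiset.coe_eq_coe.mpr (Equiv.Perm.ofFn_comp_perm (Tuple.sort z) z)]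
    simp [Fin.univ_def, List.ofFn_eq_map]
  have hp : (List.ofFn (x ∘ Tuple.sort x)).Perm (List.ofFn (y ∘ Tuple.sort y)) := by
    rw [← Multiset.coe_eq_coe, hof, hof, hm]
  have he := List.ofFn_injective (hp.eq_of_sortedLE (Tuple.monotone_sort x).sortedLE_ofFn
    (Tuple.monotone_sort y).sortedLE_ofFn)
  refine ⟨(Tuple.sort y).symm.trans (Tuple.sort x), ?_⟩
  funext i
  have := congrFun he ((Tuple.sort y).symm i)
  simpa using this

/-- Every continuous permutation-invariant function on `[0,1]^M` is continuously
sum-decomposable via `ℝ^{M+1}`. -/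
theorem continuous_symmetric_sum_decomposable (M : ℕ) (hM : 1 ≤ M)
    (f : (Fin M → Set.Icc (0 : ℝ) 1) → ℝ)
    (hf_cont : Continuous f)
    (hf_inv : ∀ (π : Equiv.Perm (Fin M)) (x : Fin M → Set.Icc (0 : ℝ) 1),
      f (x ∘ π) = f x) :
    ∃ (φ : Set.Icc (0 : ℝ) 1 → (Fin (M + 1) → ℝ)) (ρ : (Fin (M + 1) → ℝ) → ℝ),
      Continuous φ ∧ Continuous ρ ∧
        ∀ x : Fin M → Set.Icc (0 : ℝ) 1, f x = ρ (∑ i, φ (x i)) := by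
  let φ : Set.Icc (0 : ℝ) 1 → (Fin (M + 1) → ℝ) := fun t k => (t : ℝ) ^ (k : ℕ)
  have hφ : Continuous φ := by fun_prop
  let S : (Fin M → Set.Icc (0 : ℝ) 1) → (Fin (M + 1) → ℝ) := fun x => ∑ i, φ (x i)
  have hS : Continuous S := by fun_prop
  have hfac : ∀ x y, S x = S y → f x = f y := by
    intro x y hxy
    obtain ⟨π, hπ⟩ := exists_perm_of_psum_eq M (fun i => (x i : ℝ)) (fun i => (y i : ℝ)) (by
      intro k hk
      have := congrFun hxy ⟨k, by omega⟩
      simpa [S, φ] using this)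
    have : x ∘ π = y := by
      funext i
      exact Subtype.ext (congrFun hπ i)
    rw [← this, hf_inv]
  have hq : Topology.IsQuotientMap (Set.rangeFactorization S) :=
    hS.rangeFactorization.isClosedMap.isQuotientMap hS.rangeFactorization
      Set.rangeFactorization_surjective
  have hcl : IsClosed (Set.range S) := (isCompact_range hS).isClosed
  let g : C(Set.range S, ℝ) := hq.lift (f := ⟨_, hS.rangeFactorization⟩) ⟨f, hf_cont⟩
    (fun x y hxy => hfac x y (congrArg Subtype.val hxy))
  have hg : ∀ x, g (Set.rangeFactorization S x) = f x := fun x =>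
    congrArg (fun F : C(_, ℝ) => F x) (hq.lift_comp (f := ⟨_, hS.rangeFactorization⟩) ⟨f, hf_cont⟩
      (fun x y hxy => hfac x y (congrArg Subtype.val hxy)))
  obtain ⟨ρ, hρ⟩ := g.exists_restrict_eq hcl
  refine ⟨φ, ρ, hφ, ρ.continuous, fun x => ?_⟩
  rw [← hg x, ← hρ]
  rfl
end

section
/- Let M, N ∈ ℕ with M > N ≥ 1. Then there exists a continuous permutation-invariant function f : ℝ^M → ℝ that is not continuously sum-decomposable via ℝ^N: for every pair of continuous functions φ : ℝ → ℝ^N and ρ : ℝ^N → ℝ there exists x ∈ ℝ^M with f(x) ≠ ρ(∑_{i=1}^{M} φ(x_i)). -/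
open MeasureTheory Metric Module Set
open scoped NNReal ENNReal ContDiff

section Brouwer
variable {E : Type*} [NormedAddCommGroup E] [InnerProductSpace ℝ E] [FiniteDimensional ℝ E]

lemma aux_det_poly (A : E →L[ℝ] E) : ∃ p : Polynomial ℝ, p.degree < ((finrank ℝ E + 1 : ℕ) : WithBot ℕ) ∧
    ∀ s : ℝ, p.eval s = (s • ContinuousLinearMap.id ℝ E + A).det := by
  refine ⟨LinearMap.charpoly (-(A : E →ₗ[ℝ] E)), ?_, ?_⟩
  · have h := LinearMap.charpoly_natDegree (-(A : E →ₗ[ℝ] E))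
    rw [Polynomial.degree_eq_natDegree (LinearMap.charpoly_monic _).ne_zero, h]
    exact_mod_cast Nat.lt_succ_self _
  · intro s
    rw [LinearMap.eval_charpoly]
    unfold ContinuousLinearMap.det
    congr 1
    ext v
    simp [Algebra.algebraMap_eq_smul_one]

lemma aux_det_pos (A : E →L[ℝ] E) (s : ℝ) (hs : ‖A‖ < s) :
    0 < (s • ContinuousLinearMap.id ℝ E + A).det := by
  have hs0 : 0 < s := (norm_nonneg _).trans_lt hs
  let g : ℝ → ℝ := fun t => (s • ContinuousLinearMap.id ℝ E + t • A).det
  have hg : Continuous g := by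
    apply ContinuousLinearMap.continuous_det.comp
    fun_prop
  have h0 : 0 < g 0 := by
    simp only [g, zero_smul, add_zero]
    unfold ContinuousLinearMap.det
    simp
    positivity
  have hne : ∀ t ∈ Icc (0:ℝ) 1, g t ≠ 0 := by
    intro t ht h
    obtain ⟨v, hv, hv0⟩ := (Submodule.ne_bot_iff _).1 (LinearMap.bot_lt_ker_of_det_eq_zero h).ne'
    have h1 : s • v + t • A v = 0 := by simpa using hv
    have h2 : s • v = - (t • A v) := eq_neg_of_add_eq_zero_left h1
    have h3 : ‖s • v‖ = ‖t • A v‖ := by rw [h2, norm_neg]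
    rw [norm_smul, norm_smul, Real.norm_of_nonneg hs0.le, Real.norm_of_nonneg ht.1] at h3
    have h4 := A.le_opNorm v
    have h5 : 0 < ‖v‖ := norm_pos_iff.2 hv0
    have h6 : t * ‖A v‖ ≤ ‖A v‖ := mul_le_of_le_one_left (norm_nonneg _) ht.2
    nlinarith
  by_contra hcon
  have h1 : g 1 ≤ 0 := by simpa [g] using not_lt.1 hcon
  obtain ⟨t, ht, ht'⟩ := intermediate_value_Icc' (zero_le_one) hg.continuousOn ⟨h1, h0.le⟩
  exact hne t ht ht'

lemma aux_det_zero (w : E → E) (hw : ContDiff ℝ 1 w) (h1 : ∀ x, ‖w x‖ = 1) (x : E) :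
    (fderiv ℝ w x).det = 0 := by
  by_contra h
  have hd : DifferentiableAt ℝ w x := hw.differentiable (by simp) x
  have hs : Function.Surjective (fderiv ℝ w x) :=
    (LinearMap.equivOfDetNeZero (fderiv ℝ w x : E →ₗ[ℝ] E) h).surjective
  obtain ⟨v, hv⟩ := hs (w x)
  have h2 : HasFDerivAt (fun x => ‖w x‖ ^ 2) (0 : E →L[ℝ] ℝ) x := by
    simp only [h1]; exact hasFDerivAt_const _ _
  have h3 := (hd.hasFDerivAt.norm_sq).unique h2
  have h4 := congrArg (fun L => L v) h3
  simp [hv, h1] at h4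

/-- main volume argument -/
lemma aux_image (w : E → E) (h1 : ∀ x, ‖w x‖ = 1)
    (hout : ∀ x, 1 ≤ ‖x‖ → w x = (‖x‖⁻¹) • x) (L : ℝ≥0) (hL : LipschitzOnWith L w (closedBall 0 2))
    (s : ℝ) (hs : L < s) (hs2 : 2 ≤ s) :
    (fun x => s • x + w x) '' closedBall 0 1 = closedBall 0 (s + 1) := by
  have hs0 : 0 < s := by linarith
  apply Subset.antisymm
  · rintro _ ⟨x, hx, rfl⟩
    simp only [mem_closedBall_zero_iff] at hx ⊢
    calc _ ≤ ‖s • x‖ + ‖w x‖ := norm_add_le _ _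
      _ ≤ _ := by rw [norm_smul, h1, Real.norm_of_nonneg hs0.le]; nlinarith
  · intro y hy
    simp only [mem_closedBall_zero_iff] at hy
    let T : E → E := fun x => s⁻¹ • (y - w x)
    have hT : MapsTo T (closedBall 0 2) (closedBall 0 2) := by
      intro x hx
      simp only [mem_closedBall_zero_iff, T, norm_smul, norm_inv, Real.norm_of_nonneg hs0.le]
      rw [inv_mul_le_iff₀ hs0]
      have := norm_sub_le y (w x)
      rw [h1] at this
      linarith
    have hc : ContractingWith (L / s.toNNReal) (hT.restrict T _ _) := by
      constructor
      · rw [div_lt_one (by simpa using hs0)]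
        exact Real.lt_toNNReal_iff_coe_lt.2 hs
      · apply LipschitzWith.of_dist_le_mul
        rintro ⟨a, ha⟩ ⟨b, hb⟩
        have := hL.dist_le_mul a ha b hb
        simp only [Subtype.dist_eq, MapsTo.val_restrict_apply, T]
        rw [dist_smul₀, dist_sub_left]
        simp only [NNReal.coe_div, Real.coe_toNNReal _ hs0.le, norm_inv, Real.norm_of_nonneg hs0.le]
        rw [inv_mul_le_iff₀ hs0]
        calc _ ≤ _ := this
          _ = _ := by field_simp
    obtain ⟨x, hx, hfx, -⟩ := hc.exists_fixedPoint' isClosed_closedBall.isComplete hT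
      (x := 0) (by simp) (edist_ne_top _ _)
    have hxy : s • x + w x = y := by
      have : s⁻¹ • (y - w x) = x := hfx
      rw [← this, smul_inv_smul₀ hs0.ne', this]; simp
    refine ⟨x, ?_, hxy⟩
    by_contra hx1
    simp only [mem_closedBall_zero_iff, not_le] at hx1
    rw [hout x hx1.le, ← add_smul] at hxy
    have : ‖y‖ = s * ‖x‖ + 1 := by
      rw [← hxy, norm_smul, Real.norm_of_nonneg (by positivity), add_mul, inv_mul_cancel₀ (by linarith)]
    nlinarith

lemma aux_retract [Nontrivial E] (w : E → E) (hw : ContDiff ℝ 1 w) (h1 : ∀ x, ‖w x‖ = 1)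
    (hout : ∀ x, 1 ≤ ‖x‖ → w x = (‖x‖⁻¹) • x) : False := by
  borelize E
  let μ : Measure E := Measure.addHaar
  let n := finrank ℝ E
  have hcf : Continuous (fderiv ℝ w) := hw.continuous_fderiv (by simp)
  obtain ⟨C, hC⟩ := (isCompact_closedBall (0:E) 2).exists_bound_of_continuousOn hcf.continuousOn
  let L : ℝ≥0 := C.toNNReal
  have hCL : C ≤ L := Real.le_coe_toNNReal C
  have hL : LipschitzOnWith L w (closedBall 0 2) := by
    apply (convex_closedBall (0:E) 2).lipschitzOnWith_of_nnnorm_fderiv_le (𝕜 := ℝ)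
    · intro x _; exact hw.differentiable (by simp) x
    · intro x hx
      exact_mod_cast (hC x hx).trans hCL
  have key : ∀ s : ℝ, L < s → 2 ≤ s →
      ∫ x in closedBall (0:E) 1, (s • ContinuousLinearMap.id ℝ E + fderiv ℝ w x).det ∂μ
        = (s+1)^n * μ.real (closedBall 0 1) := by
    intro s hs hs2
    have hs0 : 0 < s := by linarith
    have e := lintegral_abs_det_fderiv_eq_addHaar_image μ (s := closedBall (0:E) 1)
      (f := fun x => s • x + w x)
      (f' := fun x => s • ContinuousLinearMap.id ℝ E + fderiv ℝ w x) measurableSet_closedBall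
      (fun x _ => (((hasFDerivAt_id x).const_smul s).add
        (hw.differentiable (by simp) x).hasFDerivAt).hasFDerivWithinAt) ?_
    · rw [aux_image w h1 hout L hL s hs hs2, Measure.addHaar_closedBall' _ _ (by linarith)] at e
      have hpos : ∀ x ∈ closedBall (0:E) 1,
          0 < (s • ContinuousLinearMap.id ℝ E + fderiv ℝ w x).det := by
        intro x hx
        apply aux_det_pos
        exact ((hC x (closedBall_subset_closedBall (by norm_num) hx)).trans hCL).trans_lt hs
      rw [integral_eq_lintegral_of_nonneg_ae]
      · have e2 : ∫⁻ x in closedBall (0:E) 1, ENNReal.ofReal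
            (s • ContinuousLinearMap.id ℝ E + fderiv ℝ w x).det ∂μ =
            ∫⁻ x in closedBall (0:E) 1, ENNReal.ofReal
            |(s • ContinuousLinearMap.id ℝ E + fderiv ℝ w x).det| ∂μ := by
          apply setLIntegral_congr_fun measurableSet_closedBall
          intro x hx
          simp only [abs_of_pos (hpos x hx)]
        rw [e2, e, ENNReal.toReal_mul, ENNReal.toReal_ofReal (by positivity)]
        rfl
      · exact (ae_restrict_iff' measurableSet_closedBall).2 (Filter.Eventually.of_forall
          fun x hx => (hpos x hx).le)
      · exact (ContinuousLinearMap.continuous_det.comp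
          (continuous_const.add hcf)).aestronglyMeasurable
    · intro a ha b hb hab
      have ha' := closedBall_subset_closedBall (show (1:ℝ) ≤ 2 by norm_num) ha
      have hb' := closedBall_subset_closedBall (show (1:ℝ) ≤ 2 by norm_num) hb
      have h := hL.dist_le_mul a ha' b hb'
      have h2 : s • (a - b) = w b - w a := by
        rw [smul_sub, sub_eq_sub_iff_add_eq_add]; simpa [add_comm] using hab
      have h3 : s * ‖a - b‖ = ‖w b - w a‖ := by
        rw [← h2, norm_smul, Real.norm_of_nonneg hs0.le]
      rw [dist_eq_norm, dist_eq_norm, norm_sub_rev, ← h3] at h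
      by_contra hne
      have : 0 < ‖a - b‖ := norm_pos_iff.2 (sub_ne_zero.2 hne)
      nlinarith
  let v : ℕ → ℝ := fun j => L + 2 + j
  let S := Finset.range (n+1)
  have hv : Set.InjOn v S := by
    intro a _ b _ hab
    simpa [v] using hab
  let lam : ℕ → ℝ := fun j => (Lagrange.basis S v j).eval 0
  have hlam : ∀ p : Polynomial ℝ, p.degree < ((n + 1 : ℕ) : WithBot ℕ) →
      p.eval 0 = ∑ j ∈ S, lam j * p.eval (v j) := by
    intro p hp
    have := Lagrange.eq_interpolate (s := S) (v := v) (f := p) hv (by simpa [S] using hp)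
    conv_lhs => rw [this]
    simp [Lagrange.interpolate_apply, Polynomial.eval_finsetSum, lam, mul_comm]
  have hint : ∀ s : ℝ, Integrable (fun x => (s • ContinuousLinearMap.id ℝ E + fderiv ℝ w x).det)
      (μ.restrict (closedBall 0 1)) := fun s =>
    (ContinuousLinearMap.continuous_det.comp
          (continuous_const.add hcf)).continuousOn.integrableOn_compact (isCompact_closedBall _ _)
  have hA : ∀ x, 0 = ∑ j ∈ S, lam j * (v j • ContinuousLinearMap.id ℝ E + fderiv ℝ w x).det := by
    intro x
    obtain ⟨p, hp, hp'⟩ := aux_det_poly (fderiv ℝ w x)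
    have := hlam p hp
    rw [hp'] at this
    simp only [hp'] at this
    rw [← this, zero_smul, zero_add, aux_det_zero w hw h1]
  have hB : (1:ℝ) = ∑ j ∈ S, lam j * (v j + 1) ^ n := by
    have := hlam ((Polynomial.X + 1) ^ n) (by
      rw [show (1 : Polynomial ℝ) = Polynomial.C 1 by simp, Polynomial.degree_pow,
        Polynomial.degree_X_add_C]
      simp only [nsmul_eq_mul, mul_one]
      exact_mod_cast Nat.lt_succ_self n)
    simpa using this
  have hI : (0:ℝ) = ∑ j ∈ S, lam j * ((v j + 1) ^ n * μ.real (closedBall 0 1)) := by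
    have : (0:ℝ) = ∫ x in closedBall (0:E) 1, ∑ j ∈ S, lam j *
        (v j • ContinuousLinearMap.id ℝ E + fderiv ℝ w x).det ∂μ := by
      simp only [← hA, integral_zero]
    rw [this, integral_finsetSum _ (fun j _ => (hint (v j)).const_mul _)]
    refine Finset.sum_congr rfl fun j _ => ?_
    have hj : (0:ℝ) ≤ j := by positivity
    have hl : (0:ℝ) ≤ L := L.2
    rw [integral_const_mul, key _ (by simp only [v]; linarith) (by simp only [v]; linarith)]
  simp only [← mul_assoc] at hI
  rw [← Finset.sum_mul, ← hB, one_mul] at hI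
  have : 0 < μ.real (closedBall (0:E) 1) := by
    rw [measureReal_def]
    exact ENNReal.toReal_pos (measure_closedBall_pos _ _ one_pos).ne' measure_closedBall_lt_top.ne
  linarith

lemma aux_approx {F G : Type*} [NormedAddCommGroup F] [NormedSpace ℝ F] [FiniteDimensional ℝ F]
    [NormedAddCommGroup G] [NormedSpace ℝ G] [CompleteSpace G] (f : F → G) (hf : Continuous f)
    (K : Set F) (hK : IsCompact K) (ε : ℝ) (hε : 0 < ε) :
    ∃ g : F → G, ContDiff ℝ ∞ g ∧ ∀ x ∈ K, dist (g x) (f x) < ε := by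
  have : UniformContinuousOn f (cthickening 1 K) :=
    hK.cthickening.uniformContinuousOn_of_continuous hf.continuousOn
  rcases Metric.uniformContinuousOn_iff.mp this (ε / 2) (half_pos hε) with ⟨δ, hδ, hfδ⟩
  rcases hf.exists_contDiff_dist_le_of_forall_mem_ball_dist_le
    (lt_min one_pos hδ) with ⟨g, hgc, hg⟩
  refine ⟨g, hgc, fun x hx ↦ (hg _ _ fun y hy ↦ ?_).trans_lt (half_lt_self hε)⟩
  rw [mem_ball, lt_min_iff] at hy
  exact hfδ _ (mem_cthickening_of_dist_le _ x _ _ hx hy.1.le) _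
    (self_subset_cthickening _ hx) hy.2 |>.le

lemma aux_cont [Nontrivial E] (k : E → E) (hk : Continuous k)
    (h0 : ∀ x ∈ closedBall (0:E) 1, k x ≠ 0)
    (h1 : ∀ x ∈ closedBall (0:E) 1, ‖k x - x‖ ≤ 1/4) : False := by
  obtain ⟨z, hz, hzm⟩ := (isCompact_closedBall (0:E) 1).exists_isMinOn ⟨0, by simp⟩
    hk.norm.continuousOn
  have hδ : 0 < ‖k z‖ := norm_pos_iff.2 (h0 z hz)
  obtain ⟨g, hg, hgk⟩ := aux_approx k hk _ (isCompact_closedBall (0:E) 1)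
    (min ‖k z‖ (1/4)) (lt_min hδ (by norm_num))
  have hg0 : ∀ x ∈ closedBall (0:E) 1, g x ≠ 0 := by
    intro x hx h
    have h2 := (hgk x hx).trans_le (min_le_left _ _)
    rw [h, dist_zero_left] at h2
    exact absurd (hzm hx) (not_le.2 h2)
  have hg1 : ∀ x ∈ closedBall (0:E) 1, ‖g x - x‖ ≤ 1/2 := by
    intro x hx
    have h2 := (hgk x hx).trans_le (min_le_right _ _)
    rw [dist_eq_norm] at h2
    have h3 := norm_add_le (g x - k x) (k x - x)
    have h4 := h1 x hx
    rw [sub_add_sub_cancel] at h3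
    linarith
  let η : ContDiffBump (0 : E) := ⟨3/4, 1, by norm_num, by norm_num⟩
  let u : E → E := fun x => x + η x • (g x - x)
  have hu : ContDiff ℝ 1 u := by
    have := η.contDiff (n := 1)
    have := hg.of_le (m := 1) (by exact_mod_cast le_top)
    fun_prop
  have huo : ∀ x, 1 ≤ ‖x‖ → u x = x := by
    intro x hx
    simp [u, η.zero_of_le_dist (x := x) (by simpa using hx)]
  have hu0 : ∀ x, u x ≠ 0 := by
    intro x
    rcases le_or_gt 1 ‖x‖ with hx | hx
    · rw [huo x hx, ← norm_pos_iff]; linarith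
    rcases le_or_gt ‖x‖ (3/4) with hx2 | hx2
    · have : η x = 1 := η.one_of_mem_closedBall (by simpa using hx2)
      simp only [u, this, one_smul, add_sub_cancel]
      exact hg0 x (by simpa using hx.le)
    · intro h
      have h2 : x = - (η x • (g x - x)) := eq_neg_of_add_eq_zero_left h
      have h3 : ‖x‖ = η x * ‖g x - x‖ := by
        conv_lhs => rw [h2]
        rw [norm_neg, norm_smul, Real.norm_of_nonneg η.nonneg]
      have h4 := hg1 x (by simpa using hx.le)
      have h5 : η x ≤ 1 := η.le_one
      have h6 := mul_le_of_le_one_left (norm_nonneg (g x - x)) h5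
      linarith
  refine aux_retract (fun x => ‖u x‖⁻¹ • u x) ?_ ?_ ?_
  · exact ((hu.norm ℝ hu0).inv (fun x => norm_ne_zero_iff.2 (hu0 x))).smul hu
  · intro x
    rw [norm_smul, norm_inv, norm_norm, inv_mul_cancel₀ (norm_ne_zero_iff.2 (hu0 x))]
  · intro x hx
    simp only [huo x hx]

lemma aux_noninj {F : Type*} [NormedAddCommGroup F] [NormedSpace ℝ F] [FiniteDimensional ℝ F]
    (hd : finrank ℝ F < finrank ℝ E) (Φ : E → F) (hΦ : Continuous Φ)
    (hinj : InjOn Φ (closedBall 0 1)) : False := by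
  have : Nontrivial E := Module.nontrivial_of_finrank_pos (R := ℝ) (by omega)
  have : CompactSpace (closedBall (0:E) 1) :=
    isCompact_iff_compactSpace.1 (isCompact_closedBall (0:E) 1)
  have he : Topology.IsClosedEmbedding (fun x : closedBall (0:E) 1 => Φ x) :=
    (hΦ.comp continuous_subtype_val).isClosedEmbedding (fun a b h => Subtype.ext (hinj a.2 b.2 h))
  obtain ⟨e⟩ : Nonempty (E ≃L[ℝ] (Fin (finrank ℝ E) → ℝ)) :=
    ⟨ContinuousLinearEquiv.ofFinrankEq (by simp)⟩
  obtain ⟨G, hG⟩ := ContinuousMap.exists_extension' he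
    (⟨fun x => e x, by fun_prop⟩ : C(closedBall (0:E) 1, Fin (finrank ℝ E) → ℝ))
  have hG' : ∀ x ∈ closedBall (0:E) 1, e.symm (G (Φ x)) = x := by
    intro x hx
    have := congrFun hG ⟨x, hx⟩
    simp only [Function.comp_apply, ContinuousMap.coe_mk] at this
    rw [this]; simp
  obtain ⟨P, hP, hPG⟩ := aux_approx (fun y => e.symm (G y)) (by fun_prop) (Φ '' closedBall 0 1)
    ((isCompact_closedBall _ _).image hΦ) (1/8) (by norm_num)
  have hdense := (hP.of_le (m := 1) (by exact_mod_cast le_top)).dense_compl_range_of_finrank_lt_finrank hd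
  obtain ⟨c, hc, hc'⟩ := hdense.exists_dist_lt (0:E) (show (0:ℝ) < 1/8 by norm_num)
  refine aux_cont (fun x => P (Φ x) - c) ((hP.continuous.comp hΦ).sub continuous_const) ?_ ?_
  · intro x _ h
    exact hc ⟨Φ x, sub_eq_zero.1 h⟩
  · intro x hx
    have h2 := hPG _ (mem_image_of_mem Φ hx)
    rw [hG' x hx, dist_eq_norm] at h2
    rw [dist_zero_left] at hc'
    have h3 := norm_sub_le (P (Φ x) - x) c
    rw [sub_right_comm]
    linarith
end Brouwer

theorem exists_not_continuously_sum_decomposable (M N : ℕ) (hN : 1 ≤ N) (hMN : N < M) :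
    ∃ f : (Fin M → ℝ) → ℝ,
      Continuous f ∧
      (∀ (π : Equiv.Perm (Fin M)) (x : Fin M → ℝ), f (x ∘ π) = f x) ∧
      ∀ (φ : ℝ → (Fin N → ℝ)) (ρ : (Fin N → ℝ) → ℝ),
        Continuous φ → Continuous ρ →
          ∃ x : Fin M → ℝ, f x ≠ ρ (∑ i, φ (x i)) := by
  have hne : (Finset.univ : Finset (Fin M)).Nonempty := ⟨⟨0, by omega⟩, Finset.mem_univ _⟩
  refine ⟨fun x => Finset.univ.sup' hne x, ?_, ?_, ?_⟩
  · exact Continuous.finset_sup'_apply hne (fun i _ => continuous_apply i)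
  · intro π x
    apply le_antisymm
    · exact Finset.sup'_le _ _ fun i _ => Finset.le_sup' x (Finset.mem_univ (π i))
    · refine Finset.sup'_le _ _ fun i _ => ?_
      have := Finset.le_sup' (x ∘ π) (Finset.mem_univ (π.symm i))
      simp only [Function.comp_apply, Equiv.apply_symm_apply] at this
      exact this
  · intro φ ρ hφ _
    by_contra! hcon
    have hmain : ∀ x y : Fin M → ℝ, StrictMono x → StrictMono y →
        ∑ i, φ (x i) = ∑ i, φ (y i) → ∀ i, (∀ j, i < j → x j = y j) → y i ≤ x i := by
      intro x y hx hy hsum i hij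
      let x' : Fin M → ℝ := fun j => if j ≤ i then x j else x i
      let y' : Fin M → ℝ := fun j => if j ≤ i then y j else x i
      have hs : ∑ j, φ (x' j) = ∑ j, φ (y' j) := by
        have : ∑ j, (φ (x' j) - φ (y' j)) = ∑ j, (φ (x j) - φ (y j)) := by
          refine Finset.sum_congr rfl fun j _ => ?_
          by_cases hj : j ≤ i
          · simp [x', y', hj]
          · simp [x', y', hj, hij j (not_le.1 hj)]
        rw [Finset.sum_sub_distrib, Finset.sum_sub_distrib, hsum, sub_self] at this
        exact sub_eq_zero.1 this
      have h1 : Finset.univ.sup' hne x' = Finset.univ.sup' hne y' := by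
        have a := hcon x'
        have b := hcon y'
        rw [a, b, hs]
      calc y i = y' i := by simp [y']
        _ ≤ Finset.univ.sup' hne y' := Finset.le_sup' y' (Finset.mem_univ i)
        _ = Finset.univ.sup' hne x' := h1.symm
        _ ≤ x i := Finset.sup'_le _ _ fun j _ => by
          by_cases hj : j ≤ i
          · simpa [x', hj] using hx.monotone hj
          · simp [x', hj]
    have hinj : ∀ x y : Fin M → ℝ, StrictMono x → StrictMono y →
        ∑ i, φ (x i) = ∑ i, φ (y i) → x = y := by
      intro x y hx hy hsum
      have : ∀ i, x i = y i := by
        intro i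
        induction i using WellFoundedGT.induction with
        | ind i ih =>
          exact le_antisymm (hmain y x hy hx hsum.symm i fun j hj => (ih j hj).symm)
            (hmain x y hx hy hsum i ih)
      exact funext this
    have hmono : ∀ x ∈ closedBall (0 : EuclideanSpace ℝ (Fin M)) 1,
        StrictMono (fun i : Fin M => x i + 4 * (i : ℝ)) := by
      intro x hx i j hij
      have hn : ∀ i, |x i| ≤ 1 := fun i =>
        (PiLp.norm_apply_le x i).trans (by simpa using hx)
      have h1 := abs_le.1 (hn i)
      have h2 := abs_le.1 (hn j)
      have h3 : ((i : ℕ) : ℝ) + 1 ≤ ((j : ℕ) : ℝ) := by exact_mod_cast hij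
      simp only
      linarith [h1.2, h2.1]
    refine aux_noninj (E := EuclideanSpace ℝ (Fin M)) (F := Fin N → ℝ) (by simpa using hMN)
      (fun x => ∑ i, φ (x i + 4 * (i : ℝ))) (by fun_prop) ?_
    intro x hx y hy hxy
    have := hinj _ _ (hmono x hx) (hmono y hy) hxy
    ext i
    simpa using congrFun this i
end

section
/- Let M, N ∈ ℕ with M > N ≥ 1. Then there exists a continuous permutation-invariant function f : ℝ^M → ℝ that is not max-decomposable via ℝ^N: for every pair of functions φ : ℝ → ℝ^N and ρ : ℝ^N → ℝ there exists x ∈ ℝ^M with f(x) ≠ ρ(max_{1 ≤ i ≤ M} φ(x_i)), where the maximum over i is taken independently in each of the N coordinates. -/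
/-- For `M > N ≥ 1` there exists a continuous permutation-invariant function
`f : ℝ^M → ℝ` that is not max-decomposable via `ℝ^N`, where the max over the
elements is taken independently in each latent coordinate. -/
theorem exists_not_max_decomposable (M N : ℕ) (hN : 1 ≤ N) (hMN : N < M) :
    ∃ f : (Fin M → ℝ) → ℝ,
      Continuous f ∧
      (∀ (π : Equiv.Perm (Fin M)) (x : Fin M → ℝ), f (x ∘ π) = f x) ∧
      ∀ (φ : ℝ → (Fin N → ℝ)) (ρ : (Fin N → ℝ) → ℝ),
        ∃ x : Fin M → ℝ,
          f x ≠ ρ (fun j =>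
            Finset.univ.sup' ⟨⟨0, by omega⟩, Finset.mem_univ _⟩
              (fun i : Fin M => φ (x i) j)) := by
  refine ⟨fun x => ∑ i, x i, by fun_prop, fun π x => Equiv.sum_comp π x, ?_⟩
  intro φ ρ
  by_contra! h
  have hne : (Finset.univ : Finset (Fin M)).Nonempty := ⟨⟨0, by omega⟩, Finset.mem_univ _⟩
  let x : Fin M → ℝ := fun i => ((i : ℕ) : ℝ)
  have hx : ∀ i j, x i = x j → i = j := fun i j hij => Fin.ext (Nat.cast_injective hij)
  have hmax : ∀ j : Fin N, ∃ i : Fin M, ∀ i', φ (x i') j ≤ φ (x i) j := by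
    intro j
    obtain ⟨i, -, hi⟩ := Finset.exists_max_image Finset.univ (fun i => φ (x i) j) hne
    exact ⟨i, fun i' => hi i' (Finset.mem_univ _)⟩
  choose a ha using hmax
  have hns : ¬ Function.Surjective a := by
    intro hs
    have := Fintype.card_le_of_surjective a hs
    simp at this
    omega
  obtain ⟨k, hk⟩ : ∃ k, ∀ j, a j ≠ k := by
    simpa [Function.Surjective] using hns
  let j0 : Fin N := ⟨0, by omega⟩
  let y : Fin M → ℝ := fun i => if i = k then x (a j0) else x i
  have hy : ∀ i, i ≠ k → y i = x i := fun i hi => if_neg hi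
  have hyk : y k = x (a j0) := if_pos rfl
  have key : (∑ i, x i) = ∑ i, y i := by
    have h1 := h x
    have h2 := h y
    refine h1.trans (Eq.trans ?_ h2.symm)
    congr 1
    funext j
    apply le_antisymm
    · refine Finset.sup'_le _ _ fun i _ => (ha j i).trans ?_
      rw [← hy (a j) (hk j)]
      exact Finset.le_sup' (fun i => φ (y i) j) (Finset.mem_univ (a j))
    · refine Finset.sup'_le _ _ fun i _ => ?_
      by_cases hi : i = k
      · rw [hi, hyk]
        exact Finset.le_sup' (fun i => φ (x i) j) (Finset.mem_univ (a j0))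
      · rw [hy i hi]
        exact Finset.le_sup' (fun i => φ (x i) j) (Finset.mem_univ i)
  rw [← Finset.add_sum_erase _ x (Finset.mem_univ k),
    ← Finset.add_sum_erase _ y (Finset.mem_univ k),
    Finset.sum_congr rfl (fun i hi => hy i (Finset.ne_of_mem_erase hi)), hyk] at key
  exact hk j0 (hx _ _ (add_right_cancel key)).symm
end

section
/- Let M ∈ ℕ with M ≥ 1, let k ∈ ℕ with 1 ≤ k ≤ M, and let f : ℝ^M → ℝ be continuous and permutation invariant. Then f has a continuous k-ary Janossy representation via ℝ^M: there exist a continuous function Φ : ℝ^k → ℝ^M and a continuous function ρ : ℝ^M → ℝ such that f(x₁, …, x_M) = ρ( ((M−k)!/M!) · ∑ Φ(x_{i₁}, …, x_{i_k}) ), where the sum ranges over all ordered k-tuples (i₁, …, i_k) of pairwise distinct indices in {1, …, M}. -/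
open Finset in
lemma kj_esymm_eq {M : ℕ} (x y : Fin M → ℝ)
    (h : ∀ p : Fin M, ∑ i, x i ^ (p.1 + 1) = ∑ i, y i ^ (p.1 + 1)) (n : ℕ) (hn : n ≤ M) :
    MvPolynomial.aeval x (MvPolynomial.esymm (Fin M) ℝ n) =
      MvPolynomial.aeval y (MvPolynomial.esymm (Fin M) ℝ n) := by
  induction n using Nat.strong_induction_on with
  | _ n ih =>
    rcases Nat.eq_zero_or_pos n with rfl | hpos
    · simp
    · have key := MvPolynomial.mul_esymm_eq_sum (Fin M) ℝ n
      have hx := congrArg (MvPolynomial.aeval x) key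
      have hy := congrArg (MvPolynomial.aeval y) key
      simp only [map_mul, map_sum, map_pow, map_neg, map_one, map_natCast] at hx hy
      have hn0 : (n : ℝ) ≠ 0 := by positivity
      apply mul_left_cancel₀ hn0
      rw [hx, hy]
      congr 1
      apply Finset.sum_congr rfl
      intro a ha
      rw [Finset.mem_filter, Finset.HasAntidiagonal.mem_antidiagonal] at ha
      rw [ih a.1 ha.2 (by omega)]
      congr 1
      have := h ⟨a.2 - 1, by omega⟩
      have e : a.2 - 1 + 1 = a.2 := by omega
      simp only [e] at this
      simpa [MvPolynomial.psum] using this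

lemma kj_multiset_eq {M : ℕ} (x y : Fin M → ℝ)
    (h : ∀ p : Fin M, ∑ i, x i ^ (p.1 + 1) = ∑ i, y i ^ (p.1 + 1)) :
    Finset.univ.val.map x = Finset.univ.val.map y := by
  rw [← Polynomial.roots_multiset_prod_X_sub_C (Finset.univ.val.map x),
    ← Polynomial.roots_multiset_prod_X_sub_C (Finset.univ.val.map y)]
  congr 1
  rw [Multiset.prod_X_sub_X_eq_sum_esymm, Multiset.prod_X_sub_X_eq_sum_esymm]
  simp only [Multiset.card_map, Finset.card_val, Finset.card_univ, Fintype.card_fin]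
  apply Finset.sum_congr rfl
  intro j hj
  have := kj_esymm_eq x y h j (by simpa [Nat.lt_succ_iff] using hj)
  rw [MvPolynomial.aeval_esymm_eq_multiset_esymm,
    MvPolynomial.aeval_esymm_eq_multiset_esymm] at this
  rw [this]

lemma kj_sort_eq {M : ℕ} (x y : Fin M → ℝ)
    (h : Finset.univ.val.map x = Finset.univ.val.map y) :
    x ∘ Tuple.sort x = y ∘ Tuple.sort y := by
  have hp : (List.ofFn x).Perm (List.ofFn y) := by
    rw [← Multiset.coe_eq_coe]
    simpa [List.ofFn_eq_map] using h
  have := ((((Tuple.sort x).ofFn_comp_perm x).trans hp).trans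
    ((Tuple.sort y).ofFn_comp_perm y).symm).eq_of_pairwise'
      (Tuple.monotone_sort x).sortedLE_ofFn.pairwise (Tuple.monotone_sort y).sortedLE_ofFn.pairwise
  exact List.ofFn_injective this

lemma kj_sum_emb {M k : ℕ} (hkM : k ≤ M) (j0 : Fin k) :
    ∃ c : ℝ, 0 < c ∧ ∀ g : Fin M → ℝ, ∑ e : Fin k ↪ Fin M, g (e j0) = c * ∑ i, g i := by
  classical
  let N : Fin M → ℕ := fun i => (Finset.univ.filter fun e : Fin k ↪ Fin M => e j0 = i).card
  have hN : ∀ i i', N i ≤ N i' := by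
    intro i i'
    refine Finset.card_le_card_of_injOn
      (fun e => e.trans (Equiv.swap i i').toEmbedding) ?_ ?_
    · intro e he
      simp at he
      simp [he]
    · intro e _ e' _ hee
      ext a
      have := DFunLike.congr_fun hee a
      simpa using congrArg Fin.val ((Equiv.swap i i').injective this)
  let i0 : Fin M := Fin.castLEEmb hkM j0
  refine ⟨N i0, ?_, ?_⟩
  · have : 0 < N i0 := Finset.card_pos.2 ⟨Fin.castLEEmb hkM, by simp [i0]⟩
    exact_mod_cast this
  · intro g
    rw [← Finset.sum_fiberwise_of_maps_to (t := Finset.univ)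
      (g := fun e : Fin k ↪ Fin M => e j0) (by simp), Finset.mul_sum]
    apply Finset.sum_congr rfl
    intro i _
    rw [Finset.sum_congr rfl (g := fun _ => g i)
      (by intro e he; rw [(Finset.mem_filter.1 he).2])]
    rw [Finset.sum_const, nsmul_eq_mul, le_antisymm (hN i0 i) (hN i i0)]

lemma kj_proper {M : ℕ} (hM : 1 ≤ M) (d : ℝ) (hd : 0 < d) :
    IsProperMap (fun (x : Fin M → ℝ) (p : Fin M) => d * ∑ i, x i ^ (p.1 + 1)) := by
  have hc : Continuous (fun (x : Fin M → ℝ) (p : Fin M) => d * ∑ i, x i ^ (p.1 + 1)) := by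
    fun_prop
  rw [isProperMap_iff_isCompact_preimage]
  refine ⟨hc, fun K hK => ?_⟩
  apply Metric.isCompact_of_isClosed_isBounded (hK.isClosed.preimage hc)
  obtain ⟨C, hC⟩ := hK.isBounded.exists_norm_le
  rw [isBounded_iff_forall_norm_le]
  refine ⟨C / d + 1, fun x hx => ?_⟩
  have hx' := hC _ hx
  have hC0 : 0 ≤ C := (norm_nonneg _).trans hx'
  have hCd : 0 ≤ C / d := by positivity
  have hb : ∀ p : Fin M, ∑ i, x i ^ (p.1 + 1) ≤ C / d ∧ - (C / d) ≤ ∑ i, x i ^ (p.1 + 1) := by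
    intro p
    have h1 := (norm_le_pi_norm _ p).trans hx'
    rw [Real.norm_eq_abs, abs_le] at h1
    constructor
    · rw [le_div_iff₀ hd]; linarith [h1.2]
    · rw [← neg_div, div_le_iff₀ hd]; linarith [h1.1]
  rw [pi_norm_le_iff_of_nonneg (by positivity)]
  intro i
  rw [Real.norm_eq_abs]
  rcases hM.eq_or_lt with h1 | h2
  · subst h1
    have := hb 0
    have hi : i = 0 := Subsingleton.elim _ _
    subst hi
    simp at this
    rw [abs_le]
    constructor <;> linarith
  · have := (hb ⟨1, h2⟩).1
    have h3 : x i ^ 2 ≤ ∑ i, x i ^ 2 :=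
      Finset.single_le_sum (f := fun i => x i ^ 2) (fun j _ => sq_nonneg _) (Finset.mem_univ i)
    simp only [Nat.reduceAdd] at this
    apply abs_le_of_sq_le_sq _ (by positivity)
    nlinarith


/-- Every continuous permutation-invariant `f : ℝ^M → ℝ` has a continuous k-ary
Janossy representation via `ℝ^M`: `f(x) = ρ(((M−k)!/M!) • ∑ Φ(x_{i₁},…,x_{i_k}))`,
the sum ranging over all ordered k-tuples of pairwise distinct indices
(i.e. over all injections `Fin k ↪ Fin M`). -/
theorem continuous_kary_janossy_representation (M k : ℕ) (hM : 1 ≤ M)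
    (hk : 1 ≤ k) (hkM : k ≤ M)
    (f : (Fin M → ℝ) → ℝ) (hf_cont : Continuous f)
    (hf_inv : ∀ (π : Equiv.Perm (Fin M)) (x : Fin M → ℝ), f (x ∘ π) = f x) :
    ∃ (Φ : (Fin k → ℝ) → (Fin M → ℝ)) (ρ : (Fin M → ℝ) → ℝ),
      Continuous Φ ∧ Continuous ρ ∧
        ∀ x : Fin M → ℝ,
          f x = ρ ((((M - k).factorial : ℝ) / (M.factorial : ℝ)) •
            ∑ e : Fin k ↪ Fin M, Φ (fun j => x (e j))) := by

  obtain ⟨c, hc, hsum⟩ := kj_sum_emb hkM ⟨0, hk⟩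
  set t : ℝ := ((M - k).factorial : ℝ) / (M.factorial : ℝ) with ht
  have htpos : 0 < t := by positivity
  have hd : 0 < t * c := by positivity
  have hP := kj_proper hM (t * c) hd
  set P : (Fin M → ℝ) → (Fin M → ℝ) := fun x p => (t * c) * ∑ i, x i ^ (p.1 + 1) with hPdef
  have hinj : ∀ x y, P x = P y → f x = f y := by
    intro x y hxy
    have h : ∀ p : Fin M, ∑ i, x i ^ (p.1 + 1) = ∑ i, y i ^ (p.1 + 1) := fun p =>
      mul_left_cancel₀ hd.ne' (congrFun hxy p)
    rw [← hf_inv (Tuple.sort x) x, ← hf_inv (Tuple.sort y) y,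
      kj_sort_eq x y (kj_multiset_eq x y h)]
  have hq : Topology.IsQuotientMap (Set.rangeFactorization P) :=
    IsClosedMap.isQuotientMap (hP.isClosedMap.codRestrict _)
      (hP.continuous.subtype_mk _) Set.rangeFactorization_surjective
  let q : C(Fin M → ℝ, Set.range P) := ⟨Set.rangeFactorization P, hq.continuous⟩
  let F : C(Fin M → ℝ, ℝ) := ⟨f, hf_cont⟩
  have hq' : Topology.IsQuotientMap q := hq
  have hfac : Function.FactorsThrough F q := fun x y hxy =>
    hinj x y (congrArg Subtype.val hxy)
  obtain ⟨ρ, hρ⟩ := ContinuousMap.exists_restrict_eq hP.isClosedMap.isClosed_range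
    (hq'.lift F hfac)
  refine ⟨fun y p => y ⟨0, hk⟩ ^ (p.1 + 1), ρ, by fun_prop, ρ.continuous, fun x => ?_⟩
  have h1 : (t • ∑ e : Fin k ↪ Fin M, (fun p : Fin M => x (e ⟨0, hk⟩) ^ (p.1 + 1))) = P x := by
    ext p
    simp only [Pi.smul_apply, Finset.sum_apply, smul_eq_mul, hPdef]
    rw [hsum (fun i => x i ^ (p.1 + 1)), mul_assoc]
  rw [h1]
  have h2 := DFunLike.congr_fun hρ (q x)
  have h3 := DFunLike.congr_fun (hq'.lift_comp F hfac) x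
  exact (h2.trans h3).symm
end
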